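/- In the tadpole graph with cycle of even length k, let v be the far endpoint of the pendant path and let v' be the cycle vertex farthest from v. Then for any cycle vertex w at distance l from v' (along the cycle), the hitting time from w to v equals h_{v'v} - l^2. -/

import Mathlib

open scoped Classical

/-- Transition probability of the simple random walk on `G`. -/
noncomputable def stepProb {V : Type*} [Fintype V] (G : SimpleGraph V) (a b : V) : ℝ :=
  if G.Adj a b then 1 / (G.degree a) else 0

/-- Probability that the simple random walk started at `u` follows the step sequence `w`. -/
noncomputable def walkProb {V : Type*} [Fintype V] (G : SimpleGraph V) :
    (u : V) → {n : ℕ} → (Fin n → V) → ℝ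
  | _, 0, _ => 1
  | u, n + 1, w => stepProb G u (w 0) * walkProb G (w 0) (fun i : Fin n => w i.succ)

/-- Probability that the walk started at `u` first reaches `v` at time exactly `n` (for `n ≥ 1`). -/
noncomputable def firstHitProb {V : Type*} [Fintype V] (G : SimpleGraph V) (u v : V) (n : ℕ) : ℝ :=
  ∑ w ∈ Finset.univ.filter (fun w : Fin n → V =>
      (∀ i : Fin n, (i : ℕ) + 1 < n → w i ≠ v) ∧ ∀ i : Fin n, (i : ℕ) + 1 = n → w i = v),
    walkProb G u w

/-- Expected hitting time of `v` for the simple random walk on `G` started at `u`. -/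
noncomputable def hittingTime {V : Type*} [Fintype V] (G : SimpleGraph V) (u v : V) : ℝ :=
  if u = v then 0 else ∑' n : ℕ, (n : ℝ) * firstHitProb G u v n

/-- Expected first return time to `v` of the simple random walk on `G` started at `v`. -/
noncomputable def expectedReturnTime {V : Type*} [Fintype V] (G : SimpleGraph V) (v : V) : ℝ :=
  ∑' n : ℕ, (n : ℝ) * firstHitProb G v v n
/-- The tadpole graph: a cycle on `k` vertices (`Sum.inl`) together with a pendant path
on `l` additional vertices (`Sum.inr`), attached to cycle vertex `0`; path vertex `j` is at
distance `j + 1` from the cycle, so `Sum.inr ⟨l-1,_⟩` is the far endpoint of the path. -/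
def tadpole (k l : ℕ) : SimpleGraph (Fin k ⊕ Fin l) :=
  SimpleGraph.fromRel (fun x y =>
    match x, y with
    | Sum.inl i, Sum.inl j => ((i : ℕ) + 1) % k = (j : ℕ)
    | Sum.inl i, Sum.inr j => (i : ℕ) = 0 ∧ (j : ℕ) = 0
    | Sum.inr i, Sum.inr j => (i : ℕ) + 1 = (j : ℕ)
    | Sum.inr _, Sum.inl _ => False)


namespace TP
variable {V : Type*} [Fintype V]

/-- Survival probability. -/
noncomputable def surv (G : SimpleGraph V) (v : V) : ℕ → V → ℝ
  | 0, _ => 1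
  | n + 1, u => ∑ b, stepProb G u b * (if b = v then 0 else surv G v n b)

lemma stepProb_nonneg (G : SimpleGraph V) (a b : V) : 0 ≤ stepProb G a b := by
  unfold stepProb; split_ifs <;> positivity

lemma firstHit_one (G : SimpleGraph V) (u v : V) : firstHitProb G u v 1 = stepProb G u v := by
  unfold firstHitProb
  rw [Finset.sum_eq_single (fun _ => v)]
  · simp [walkProb]
  · intro w hw hne
    exfalso; apply hne
    simp only [Finset.mem_filter] at hw
    ext i
    have := hw.2.2 i (by omega)
    rw [this]
  · intro h; exfalso; apply h
    simp

lemma firstHit_succ (G : SimpleGraph V) (u v : V) (n : ℕ) :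
    firstHitProb G u v (n + 2) =
      ∑ b, stepProb G u b * (if b = v then 0 else firstHitProb G b v (n + 1)) := by
  unfold firstHitProb
  rw [Finset.sum_filter, ← (Fin.consEquiv (fun _ : Fin (n + 2) => V)).sum_comp,
    Fintype.sum_prod_type]
  refine Finset.sum_congr rfl fun b _ => ?_
  by_cases hb : b = v
  · simp only [hb, if_true, mul_zero]
    refine Finset.sum_eq_zero fun w _ => if_neg ?_
    rintro ⟨h, -⟩
    exact h 0 (by simp) (by simp [Fin.consEquiv])
  · rw [if_neg hb, Finset.sum_filter, Finset.mul_sum]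
    refine Finset.sum_congr rfl fun w _ => ?_
    rw [mul_ite, mul_zero]
    refine if_congr ?_ ?_ rfl
    · simp [Fin.consEquiv, Fin.forall_fin_succ (n := n + 1), hb]
    · simp [Fin.consEquiv, walkProb]

lemma firstHit_eq (G : SimpleGraph V) (v : V) (hp : ∀ u, u ≠ v → ∑ b, stepProb G u b = 1)
    (n : ℕ) : ∀ u, u ≠ v → firstHitProb G u v (n + 1) = surv G v n u - surv G v (n + 1) u := by
  induction n with
  | zero =>
    intro u hu
    rw [firstHit_one]
    have h1 := hp u hu
    simp only [surv, mul_ite, mul_zero, mul_one]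
    rw [← h1, ← Finset.sum_sub_distrib, Finset.sum_eq_single v]
    · simp
    · intro b _ hb; simp [hb]
    · simp
  | succ n ih =>
    intro u hu
    rw [firstHit_succ, surv, surv, ← Finset.sum_sub_distrib]
    refine Finset.sum_congr rfl fun b _ => ?_
    by_cases hb : b = v
    · simp [hb]
    · simp only [hb, if_false]
      rw [ih b hb]; ring

lemma surv_nonneg (G : SimpleGraph V) (v : V) (n : ℕ) : ∀ u, 0 ≤ surv G v n u := by
  induction n with
  | zero => intro u; simp [surv]
  | succ n ih =>
    intro u
    refine Finset.sum_nonneg fun b _ => mul_nonneg (stepProb_nonneg G u b) ?_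
    split_ifs
    · exact le_rfl
    · exact ih b

lemma surv_anti (G : SimpleGraph V) (v : V) (hp : ∀ u, u ≠ v → ∑ b, stepProb G u b = 1)
    (u : V) (hu : u ≠ v) : Antitone (fun n => surv G v n u) := by
  refine antitone_nat_of_succ_le fun n => ?_
  have h := firstHit_eq G v hp n u hu
  have : 0 ≤ firstHitProb G u v (n + 1) := by
    have hw : ∀ (m : ℕ) (a : V) (w : Fin m → V), 0 ≤ walkProb G a w := by
      intro m
      induction m with
      | zero => intro a w; simp [walkProb]
      | succ m ih => intro a w; exact mul_nonneg (stepProb_nonneg _ _ _) (ih _ _)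
    exact Finset.sum_nonneg fun w _ => hw _ _ _
  linarith

/-- Bounds for partial sums of survival probabilities. -/
lemma resid (G : SimpleGraph V) (v : V) (H : V → ℝ) (M : ℝ) (h0 : ∀ u, 0 ≤ H u)
    (hM : ∀ u, H u ≤ M) (hv : H v = 0)
    (hH : ∀ u, u ≠ v → H u = 1 + ∑ b, stepProb G u b * H b) (N : ℕ) :
    ∀ u, u ≠ v → 0 ≤ H u - ∑ n ∈ Finset.range N, surv G v n u ∧
      H u - ∑ n ∈ Finset.range N, surv G v n u ≤ M * surv G v N u := by
  induction N with
  | zero => intro u hu; simpa [surv] using ⟨h0 u, hM u⟩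
  | succ N ih =>
    intro u hu
    have key : H u - ∑ n ∈ Finset.range (N + 1), surv G v n u =
        ∑ b, stepProb G u b *
          (if b = v then 0 else (H b - ∑ n ∈ Finset.range N, surv G v n b)) := by
      rw [Finset.sum_range_succ', hH u hu]
      simp only [surv]
      rw [Finset.sum_comm, add_comm _ (1 : ℝ), add_sub_add_left_eq_sub,
        ← Finset.sum_sub_distrib]
      refine Finset.sum_congr rfl fun b _ => ?_
      rw [← Finset.mul_sum, ← mul_sub]
      by_cases hb : b = v
      · simp [hb, hv]
      · simp [hb]
    rw [key]
    constructor
    · refine Finset.sum_nonneg fun b _ => mul_nonneg (stepProb_nonneg G u b) ?_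
      split_ifs with hb
      · exact le_rfl
      · exact (ih b hb).1
    · rw [surv, Finset.mul_sum]
      refine Finset.sum_le_sum fun b _ => ?_
      rw [mul_left_comm]
      refine mul_le_mul_of_nonneg_left ?_ (stepProb_nonneg G u b)
      split_ifs with hb
      · simp
      · exact (ih b hb).2

lemma walkProb_nonneg (G : SimpleGraph V) (m : ℕ) :
    ∀ (a : V) (w : Fin m → V), 0 ≤ walkProb G a w := by
  induction m with
  | zero => intro a w; simp [walkProb]
  | succ m ih => intro a w; exact mul_nonneg (stepProb_nonneg _ _ _) (ih _ _)

lemma hitting_eq (G : SimpleGraph V) (v : V) (H : V → ℝ) (M : ℝ) (h0 : ∀ u, 0 ≤ H u)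
    (hM : ∀ u, H u ≤ M) (hv : H v = 0)
    (hp : ∀ u, u ≠ v → ∑ b, stepProb G u b = 1)
    (hH : ∀ u, u ≠ v → H u = 1 + ∑ b, stepProb G u b * H b) (u : V) (hu : u ≠ v) :
    hittingTime G u v = H u := by
  have hs : Summable (fun n => surv G v n u) := by
    refine summable_of_sum_range_le (c := H u) (fun n => surv_nonneg G v n u) fun N => ?_
    have := (resid G v H M h0 hM hv hH N u hu).1
    linarith
  have hS0 := hs.tendsto_atTop_zero
  have hNS : Filter.Tendsto (fun n : ℕ => (n : ℝ) * surv G v n u) Filter.atTop (nhds 0) := by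
    have hP := hs.hasSum.tendsto_sum_nat
    have hhalf : Filter.Tendsto (fun N : ℕ => N / 2) Filter.atTop Filter.atTop :=
      Filter.tendsto_atTop_atTop.2 fun b => ⟨2 * b, fun a ha => by omega⟩
    have hdiff := ((hP.sub (hP.comp hhalf)).const_mul 2)
    rw [sub_self, mul_zero] at hdiff
    refine squeeze_zero (fun N => mul_nonneg (by positivity) (surv_nonneg G v N u))
      (fun N => ?_) hdiff
    have h1 : ((N - N / 2 : ℕ) : ℝ) * surv G v N u ≤
        ∑ n ∈ Finset.Ico (N / 2) N, surv G v n u := by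
      have := Finset.card_nsmul_le_sum (Finset.Ico (N / 2) N) (fun n => surv G v n u)
        (surv G v N u) (fun n hn => surv_anti G v hp u hu (Finset.mem_Ico.1 hn).2.le)
      simpa using this
    have h2 : (N : ℝ) ≤ 2 * ((N - N / 2 : ℕ) : ℝ) := by
      have : N ≤ 2 * (N - N / 2) := by omega
      exact_mod_cast this
    rw [Finset.sum_Ico_eq_sub _ (Nat.div_le_self N 2)] at h1
    have h3 := mul_le_mul_of_nonneg_right h2 (surv_nonneg G v N u)
    simp only [Function.comp_apply]
    linarith
  have hsum : Filter.Tendsto (fun N => ∑ n ∈ Finset.range N, surv G v n u)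
      Filter.atTop (nhds (H u)) := by
    have h1 : Filter.Tendsto (fun N => H u - ∑ n ∈ Finset.range N, surv G v n u)
        Filter.atTop (nhds 0) := by
      refine squeeze_zero (fun N => (resid G v H M h0 hM hv hH N u hu).1)
        (fun N => (resid G v H M h0 hM hv hH N u hu).2) ?_
      simpa using hS0.const_mul M
    simpa using h1.const_sub (H u)
  have hpart : ∀ N : ℕ, ∑ n ∈ Finset.range (N + 1), (n : ℝ) * firstHitProb G u v n =
      ∑ n ∈ Finset.range N, surv G v n u - N * surv G v N u := by
    intro N
    induction N with
    | zero => simp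
    | succ N ih =>
      rw [Finset.sum_range_succ, ih, firstHit_eq G v hp N u hu, Finset.sum_range_succ]
      push_cast; ring
  rw [hittingTime, if_neg hu]
  refine HasSum.tsum_eq ?_
  rw [hasSum_iff_tendsto_nat_of_nonneg]
  · rw [← Filter.tendsto_add_atTop_iff_nat 1]
    simp only [hpart]
    simpa using hsum.sub hNS
  · intro n
    exact mul_nonneg (by positivity) (Finset.sum_nonneg fun w _ => walkProb_nonneg _ _ _ _)

lemma step_sum (G : SimpleGraph V) (u : V) (s : Finset V) (hs : ∀ b, G.Adj u b ↔ b ∈ s)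
    (g : V → ℝ) : ∑ b, stepProb G u b * g b = (∑ b ∈ s, g b) / s.card := by
  have hd : G.degree u = s.card := by
    rw [← SimpleGraph.card_neighborFinset_eq_degree]
    congr 1
    ext b; simp [hs]
  simp only [stepProb, hd, hs, ite_mul, zero_mul]
  rw [Finset.sum_ite_mem, Finset.univ_inter, Finset.sum_div]
  exact Finset.sum_congr rfl fun b _ => by ring

lemma step_sum_two (G : SimpleGraph V) (u x y : V) (hxy : x ≠ y)
    (hs : ∀ b, G.Adj u b ↔ b = x ∨ b = y) (g : V → ℝ) :
    ∑ b, stepProb G u b * g b = (g x + g y) / 2 := by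
  rw [step_sum G u {x, y} (by simpa using hs), Finset.sum_pair hxy, Finset.card_pair hxy]
  norm_num

lemma step_sum_three (G : SimpleGraph V) (u x y z : V) (hxy : x ≠ y) (hxz : x ≠ z) (hyz : y ≠ z)
    (hs : ∀ b, G.Adj u b ↔ b = x ∨ b = y ∨ b = z) (g : V → ℝ) :
    ∑ b, stepProb G u b * g b = (g x + g y + g z) / 3 := by
  rw [step_sum G u {x, y, z} (by simpa using hs), Finset.card_eq_three.2 ⟨x, y, z, hxy, hxz, hyz, rfl⟩,
    Finset.sum_insert (by simp [hxy, hxz]), Finset.sum_pair hyz]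
  norm_num [add_assoc]

lemma mod_succ (k i : ℕ) (h : i < k) : (i + 1) % k = if i + 1 = k then 0 else i + 1 := by
  split_ifs with h1
  · rw [h1, Nat.mod_self]
  · exact Nat.mod_eq_of_lt (by omega)

/-- Explicit hitting time. -/
noncomputable def HT (k l : ℕ) : Fin k ⊕ Fin l → ℝ
  | Sum.inl i => (2 * k + 2 * l) * l - (l : ℝ) ^ 2 + k * (i : ℕ) - ((i : ℕ) : ℝ) ^ 2
  | Sum.inr p => (2 * k + 2 * l) * ((l : ℝ) - 1 - (p : ℕ)) - ((l : ℝ) - 1 - (p : ℕ)) ^ 2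

lemma nb_zero (k l : ℕ) (hk : 3 ≤ k) (hl : 1 ≤ l) (i : Fin k) (hi : (i : ℕ) = 0) :
    ∀ b, (tadpole k l).Adj (Sum.inl i) b ↔
      b = Sum.inl ⟨1, by omega⟩ ∨ b = Sum.inl ⟨k - 1, by omega⟩ ∨ b = Sum.inr ⟨0, by omega⟩ := by
  rintro (j | j)
  · have := j.2
    simp only [tadpole, SimpleGraph.fromRel_adj, ne_eq, Sum.inl.injEq, Fin.ext_iff,
      mod_succ k _ i.2, mod_succ k _ j.2, reduceCtorEq, or_false]
    split_ifs <;> omega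
  · simp [tadpole, SimpleGraph.fromRel_adj, Fin.ext_iff, hi]

lemma nb_inl (k l : ℕ) (hk : 3 ≤ k) (h0 : 0 < k) (i : Fin k) (hi : (i : ℕ) ≠ 0) :
    ∀ b, (tadpole k l).Adj (Sum.inl i) b ↔
      b = Sum.inl ⟨i - 1, by omega⟩ ∨ b = Sum.inl ⟨(i + 1) % k, Nat.mod_lt _ h0⟩ := by
  rintro (j | j)
  · have := j.2
    simp only [tadpole, SimpleGraph.fromRel_adj, ne_eq, Sum.inl.injEq, Fin.ext_iff,
      mod_succ k _ i.2, mod_succ k _ j.2]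
    split_ifs <;> omega
  · simp [tadpole, SimpleGraph.fromRel_adj, hi]

lemma nb_inr_zero (k l : ℕ) (h0 : 0 < k) (p : Fin l) (hp : (p : ℕ) = 0) (hp' : (p : ℕ) + 1 < l) :
    ∀ b, (tadpole k l).Adj (Sum.inr p) b ↔
      b = Sum.inl ⟨0, h0⟩ ∨ b = Sum.inr ⟨p + 1, hp'⟩ := by
  rintro (j | j)
  · simp [tadpole, SimpleGraph.fromRel_adj, Fin.ext_iff, hp]
  · simp only [tadpole, SimpleGraph.fromRel_adj, ne_eq, Sum.inr.injEq, Fin.ext_iff, reduceCtorEq,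
      false_or]
    omega

lemma nb_inr (k l : ℕ) (p : Fin l) (hp : (p : ℕ) ≠ 0) (hp' : (p : ℕ) + 1 < l) :
    ∀ b, (tadpole k l).Adj (Sum.inr p) b ↔
      b = Sum.inr ⟨p - 1, by omega⟩ ∨ b = Sum.inr ⟨p + 1, hp'⟩ := by
  rintro (j | j)
  · simp [tadpole, SimpleGraph.fromRel_adj, hp]
  · simp only [tadpole, SimpleGraph.fromRel_adj, ne_eq, Sum.inr.injEq, Fin.ext_iff]
    omega

lemma step_tad (k l : ℕ) (hk : 3 ≤ k) (hl : 1 ≤ l) (hl' : l - 1 < l) (u : Fin k ⊕ Fin l)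
    (hu : u ≠ Sum.inr ⟨l - 1, hl'⟩) :
    ∑ b, stepProb (tadpole k l) u b = 1 ∧
      HT k l u = 1 + ∑ b, stepProb (tadpole k l) u b * HT k l b := by
  have two : ∀ x y, x ≠ y → (∀ b, (tadpole k l).Adj u b ↔ b = x ∨ b = y) →
      HT k l u = 1 + (HT k l x + HT k l y) / 2 → ∑ b, stepProb (tadpole k l) u b = 1 ∧
      HT k l u = 1 + ∑ b, stepProb (tadpole k l) u b * HT k l b := by
    intro x y hxy hs h
    have h1 := step_sum_two _ u x y hxy hs (fun _ => 1)
    have h2 := step_sum_two _ u x y hxy hs (HT k l)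
    refine ⟨?_, by rw [h2, h]⟩
    simp only [mul_one] at h1
    rw [h1]; norm_num
  rcases u with i | p
  · by_cases hi : (i : ℕ) = 0
    · have hs := nb_zero k l hk hl i hi
      have h1 := step_sum_three _ _ _ _ _ (by simp [Fin.ext_iff]; omega) (by simp) (by simp)
        hs (fun _ => 1)
      have h2 := step_sum_three _ _ _ _ _ (by simp [Fin.ext_iff]; omega) (by simp) (by simp)
        hs (HT k l)
      constructor
      · simp only [mul_one] at h1
        rw [h1]; norm_num
      · rw [h2]
        simp only [HT, hi]
        rw [Nat.cast_sub (by omega)]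
        push_cast
        ring
    · refine two _ _ ?_ (nb_inl k l hk (by omega) i hi) ?_
      · simp only [ne_eq, Sum.inl.injEq, Fin.ext_iff, mod_succ k _ i.2]
        split_ifs <;> omega
      · simp only [HT, mod_succ k _ i.2]
        rw [Nat.cast_sub (by omega)]
        split_ifs with h
        · have : (k : ℝ) = (i : ℕ) + 1 := by exact_mod_cast h.symm
          rw [this]; push_cast; ring
        · push_cast; ring
  · have hp' : (p : ℕ) + 1 < l := by
      have := p.2
      simp only [ne_eq, Sum.inr.injEq, Fin.ext_iff] at hu
      omega
    by_cases hp : (p : ℕ) = 0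
    · refine two _ _ (by simp) (nb_inr_zero k l (by omega) p hp hp') ?_
      simp only [HT, hp]
      push_cast; ring
    · refine two _ _ (by simp only [ne_eq, Sum.inr.injEq, Fin.ext_iff]; omega) (nb_inr k l p hp hp') ?_
      simp only [HT]
      rw [Nat.cast_sub (by omega)]
      push_cast; ring

lemma HT_nonneg (k l : ℕ) (u : Fin k ⊕ Fin l) : 0 ≤ HT k l u := by
  rcases u with i | p
  · have h1 : ((i : ℕ) : ℝ) ≤ k := by exact_mod_cast i.2.le
    have h2 : (0 : ℝ) ≤ (i : ℕ) := by positivity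
    have h3 : (0 : ℝ) ≤ l := by positivity
    have h4 : (0 : ℝ) ≤ k := by positivity
    simp only [HT]
    nlinarith [mul_nonneg h2 (sub_nonneg.2 h1), mul_nonneg h3 h4, mul_nonneg h3 h3]
  · have h1 : ((p : ℕ) : ℝ) + 1 ≤ l := by exact_mod_cast p.2
    have h2 : (0 : ℝ) ≤ (p : ℕ) := by positivity
    have h4 : (0 : ℝ) ≤ k := by positivity
    have e : HT k l (Sum.inr p) = ((l : ℝ) - 1 - (p : ℕ)) * (2 * k + l + 1 + (p : ℕ)) := by
      simp only [HT]; ring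
    rw [e]
    exact mul_nonneg (by linarith) (by linarith)

lemma hit_tad (k l : ℕ) (hk : 3 ≤ k) (hl : 1 ≤ l) (hl' : l - 1 < l) (i : Fin k) :
    hittingTime (tadpole k l) (Sum.inl i) (Sum.inr ⟨l - 1, hl'⟩) = HT k l (Sum.inl i) := by
  refine hitting_eq _ _ (HT k l) (∑ u, HT k l u) (HT_nonneg k l)
    (fun u => Finset.single_le_sum (fun b _ => HT_nonneg k l b) (Finset.mem_univ u)) ?_
    (fun u hu => (step_tad k l hk hl hl' u hu).1) (fun u hu => (step_tad k l hk hl hl' u hu).2) _ (by simp)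
  simp only [HT]
  rw [Nat.cast_sub hl]
  push_cast; ring

end TP

theorem stmt_9 (k l : ℕ) (hk : 3 ≤ k) (hke : Even k) (hl : 1 ≤ l)
    (v : Fin k ⊕ Fin l) (hv : v = Sum.inr ⟨l - 1, by omega⟩)
    (v' : Fin k ⊕ Fin l) (hv' : v' = Sum.inl ⟨k / 2, by omega⟩)
    (j : ℕ) (hj : j ≤ k / 2) :
    hittingTime (tadpole k l) (Sum.inl ⟨(k / 2 + j) % k, Nat.mod_lt _ (by omega)⟩) v =
      hittingTime (tadpole k l) v' v - (j : ℝ) ^ 2 ∧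
    hittingTime (tadpole k l) (Sum.inl ⟨(k / 2 + (k - j)) % k, Nat.mod_lt _ (by omega)⟩) v =
      hittingTime (tadpole k l) v' v - (j : ℝ) ^ 2 := by
  obtain ⟨m, rfl⟩ := hke
  subst hv hv'
  rw [TP.hit_tad _ _ hk hl _, TP.hit_tad _ _ hk hl _, TP.hit_tad _ _ hk hl _]
  have hm : (m + m) / 2 = m := by omega
  simp only [TP.HT, hm]
  rw [hm] at hj
  constructor
  · rcases hj.lt_or_eq with h | rfl
    · rw [Nat.mod_eq_of_lt (by omega)]
      push_cast; ring
    · rw [Nat.mod_self]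
      push_cast; ring
  · rcases Nat.eq_zero_or_pos j with rfl | h
    · rw [Nat.sub_zero, Nat.add_mod_right, Nat.mod_eq_of_lt (by omega)]
      push_cast; ring
    · have e : m + (m + m - j) = (m - j) + (m + m) := by omega
      rw [e, Nat.add_mod_right, Nat.mod_eq_of_lt (by omega), Nat.cast_sub hj]
      push_cast; ring
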